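/- Let (Ω, μ) be a probability space, X ~ μ, and X₁, …, X_N independent copies of X. Let m > 0 and M ≥ 1, and let h : Ω → ℝ be measurable with ||h||_{L₂} ≤ m and ||h||_{L_∞} ≤ mM. Then 𝔼 W₁(F_{N,h}, F_h) ≤ 2m · log(eM)/√N. -/

import Mathlib

open MeasureTheory

noncomputable section

variable {Ω : Type*} [MeasurableSpace Ω]

/-- The `L₂(μ)` norm of a function. -/
def L2norm (μ : Measure Ω) (f : Ω → ℝ) : ℝ := Real.sqrt (∫ ω, (f ω) ^ 2 ∂μ)

/-- The `L_p(μ)` norm of a function. -/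
def Lpnorm (μ : Measure Ω) (p : ℝ) (f : Ω → ℝ) : ℝ := (∫ ω, |f ω| ^ p ∂μ) ^ (1 / p)

/-- The empirical `L₂` norm `||f||_{L₂(P_N)} = ((1/N) Σ_i f(X_i)²)^{1/2}`. -/
def empL2 {N : ℕ} (xs : Fin N → Ω) (f : Ω → ℝ) : ℝ :=
  Real.sqrt ((1 / (N : ℝ)) * ∑ i, (f (xs i)) ^ 2)

/-- The empirical distribution function `F_{N,f}` of the sample `(f(X_i))_{i ≤ N}`. -/
def empCDF {N : ℕ} (xs : Fin N → Ω) (f : Ω → ℝ) (t : ℝ) : ℝ :=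
  (({i | f (xs i) ≤ t} : Set (Fin N)).ncard : ℝ) / N

/-- The distribution function `F_f(t) = μ(f ≤ t)` of `f` under `μ`. -/
def trueCDF (μ : Measure Ω) (f : Ω → ℝ) (t : ℝ) : ℝ := (μ {ω | f ω ≤ t}).toReal

/-- Wasserstein-1 distance between two distribution functions. -/
def W1 (F H : ℝ → ℝ) : ℝ := ∫ t : ℝ, |F t - H t|

/-- The radius `d_F = sup_{f ∈ F} ||f||_{L₂(μ)}` of a class of functions. -/
def radius (μ : Measure Ω) (F : Set (Ω → ℝ)) : ℝ := ⨆ f ∈ F, L2norm μ f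

/-- Generalized inverse (quantile function) of a distribution function. -/
def quantile (F : ℝ → ℝ) (u : ℝ) : ℝ := sInf {t : ℝ | u ≤ F t}

/-- The `i`-th coordinate of the monotone nondecreasing rearrangement `v^♯` of `v`. -/
def orderStat {N : ℕ} (v : Fin N → ℝ) (i : Fin N) : ℝ :=
  sInf {t : ℝ | (i : ℕ) + 1 ≤ ({j | v j ≤ t} : Set (Fin N)).ncard}

/-- Talagrand's `γ₂` functional of the set `T` with respect to the distance `dst`:
the infimum over admissible sequences `(T_s)` (subsets of `T` with `|T₀| = 1` and
`|T_s| ≤ 2^(2^s)`) of `sup_{t ∈ T} Σ_s 2^(s/2) dist(t, T_s)`. -/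
def gamma2 {E : Type*} (dst : E → E → ℝ) (T : Set E) : ℝ :=
  sInf {r : ℝ | ∃ Ts : ℕ → Set E,
    (∀ s, Ts s ⊆ T) ∧ (Ts 0).ncard = 1 ∧ (∀ s, (Ts s).Finite ∧ (Ts s).ncard ≤ 2 ^ 2 ^ s) ∧
    r = ⨆ t ∈ T, ∑' s : ℕ, (2 : ℝ) ^ ((s : ℝ) / 2) * sInf (dst t '' Ts s)}

/-- The `L₂(μ)` distance on functions. -/
def L2dist (μ : Measure Ω) (f h : Ω → ℝ) : ℝ := L2norm μ (f - h)

end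

/-!
By Fubini, the expected Wasserstein distance is the integral over `t` of the mean absolute
deviation of `F_{N,h}(t)`, a sample mean of indicators of `{h ≤ t}`. Its standard deviation is
`σ(t) / √N` with `σ = √(F_h (1 - F_h))`, so `𝔼 W₁ ≤ (∫ σ) / √N`. Now `σ ≤ 1` everywhere,
`σ(t) ≤ m / |t|` by Chebyshev's inequality, and `σ(t) = 0` for `|t| > m M`. Integrating
`m / max m |t|` over `[-m M, m M]` gives `2 m (1 + log M) = 2 m log (e M)`.
-/

open ProbabilityTheory Set Filter Function Topology

section SampleMean

variable {Ω ι : Type*} [MeasurableSpace Ω] {μ : Measure Ω}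

lemma memLp_indicator_one [IsFiniteMeasure μ] {A : Set Ω} {p : ENNReal} (hA : MeasurableSet A) :
    MemLp (A.indicator (1 : Ω → ℝ)) p μ :=
  memLp_indicator_const p hA 1 (.inr (measure_ne_top μ A))

variable [IsProbabilityMeasure μ]

lemma variance_indicator_one {A : Set Ω} (hA : MeasurableSet A) :
    Var[A.indicator 1; μ] = μ.real A * (1 - μ.real A) := by
  have hsq : (A.indicator 1 : Ω → ℝ) ^ 2 = A.indicator 1 := by
    ext ω
    by_cases hω : ω ∈ A <;> simp [hω]
  rw [variance_eq_sub (memLp_indicator_one hA), hsq, integral_indicator_one hA]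
  ring

lemma integral_abs_sub_integral_le_sqrt_variance {X : Ω → ℝ} (hX : MemLp X 2 μ) :
    ∫ ω, |X ω - μ[X]| ∂μ ≤ √Var[X; μ] := by
  have hdev : MemLp (fun ω ↦ |X ω - μ[X]|) 2 μ := (hX.sub (memLp_const _)).norm
  have hvar := variance_nonneg (fun ω ↦ |X ω - μ[X]|) μ
  rw [variance_eq_sub hdev] at hvar
  refine Real.le_sqrt_of_sq_le ?_
  simpa only [Pi.pow_apply, sq_abs, ← variance_eq_integral hX.aemeasurable, sub_nonneg] using hvar

variable [Fintype ι] {Y : Ω → ℝ}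

lemma memLp_sum_comp_eval {p : ENNReal} (hY : MemLp Y p μ) :
    MemLp (fun xs : ι → Ω ↦ ∑ i, Y (xs i)) p (Measure.pi fun _ ↦ μ) :=
  memLp_finsetSum _ fun i _ ↦
    hY.comp_measurePreserving (measurePreserving_eval (fun _ : ι ↦ μ) i)

lemma integral_sampleMean [Nonempty ι] (hY : Integrable Y μ) :
    ∫ xs : ι → Ω, (∑ i, Y (xs i)) / Fintype.card ι ∂(Measure.pi fun _ ↦ μ) = ∫ ω, Y ω ∂μ := by
  rw [integral_div, integral_finsetSum _ fun i _ ↦ integrable_comp_eval hY]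
  simp_rw [integral_comp_eval (μ := fun _ : ι ↦ μ) hY.aestronglyMeasurable]
  simp

lemma variance_sampleMean (hY : MemLp Y 2 μ) :
    Var[fun xs : ι → Ω ↦ (∑ i, Y (xs i)) / Fintype.card ι; Measure.pi fun _ ↦ μ] =
      Var[Y; μ] / Fintype.card ι := by
  have hsum : Var[fun xs : ι → Ω ↦ ∑ i, Y (xs i); Measure.pi fun _ ↦ μ] =
      Fintype.card ι * Var[Y; μ] := by
    rw [← Finset.sum_fn, variance_sum_pi fun _ ↦ hY]
    simp
  simp_rw [div_eq_mul_inv _ (Fintype.card ι : ℝ), variance_mul_const, hsum]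
  obtain hι | hι := eq_or_ne (Fintype.card ι : ℝ) 0
  · simp [hι]
  · field_simp

lemma integral_abs_sampleMean_sub_le [Nonempty ι] (hY : MemLp Y 2 μ) :
    ∫ xs : ι → Ω, |(∑ i, Y (xs i)) / Fintype.card ι - ∫ ω, Y ω ∂μ| ∂(Measure.pi fun _ ↦ μ) ≤
      √Var[Y; μ] / √(Fintype.card ι) := by
  have hmean : MemLp (fun xs : ι → Ω ↦ (∑ i, Y (xs i)) / Fintype.card ι) 2
      (Measure.pi fun _ ↦ μ) := by
    simpa only [div_eq_mul_inv] using (memLp_sum_comp_eval hY).mul_const _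
  have h := integral_abs_sub_integral_le_sqrt_variance hmean
  rwa [integral_sampleMean (hY.integrable one_le_two), variance_sampleMean hY,
    Real.sqrt_div' _ (Nat.cast_nonneg _)] at h

end SampleMean

section DistributionFunction

variable {Ω : Type*} [MeasurableSpace Ω]

/-- The standard deviation `√(F_h(t) (1 - F_h(t)))` of the indicator of `{h ≤ t}`, as a function
of the level `t`. It governs the fluctuations of the empirical distribution function at `t`. -/
noncomputable def cdfStdDev (μ : Measure Ω) (h : Ω → ℝ) (t : ℝ) : ℝ :=
  √(trueCDF μ h t * (1 - trueCDF μ h t))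

variable {μ : Measure Ω} {h : Ω → ℝ} {t : ℝ}

lemma trueCDF_nonneg : 0 ≤ trueCDF μ h t := measureReal_nonneg

lemma trueCDF_eq_zero_of_ae_lt (hlt : ∀ᵐ ω ∂μ, t < h ω) : trueCDF μ h t = 0 := by
  have hnull : μ {ω | h ω ≤ t} = 0 := by simpa only [ae_iff, not_lt] using hlt
  simp [trueCDF, hnull]

lemma monotone_trueCDF [IsFiniteMeasure μ] : Monotone (trueCDF μ h) := fun _ _ hst ↦
  measureReal_mono fun _ hω ↦ le_trans hω hst

lemma cdfStdDev_nonneg : 0 ≤ cdfStdDev μ h t := Real.sqrt_nonneg _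

lemma measurable_cdfStdDev [IsFiniteMeasure μ] : Measurable (cdfStdDev μ h) := by
  have hF : Measurable (trueCDF μ h) := monotone_trueCDF.measurable
  exact (hF.mul (measurable_const.sub hF)).sqrt

variable [IsProbabilityMeasure μ]

lemma trueCDF_le_one : trueCDF μ h t ≤ 1 := measureReal_le_one

lemma one_sub_trueCDF (hh : AEMeasurable h μ) : 1 - trueCDF μ h t = μ.real {ω | t < h ω} := by
  have hcompl := probReal_compl_eq_one_sub₀
    (hh.nullMeasurableSet_preimage (measurableSet_Iic (a := t)))
  rw [← preimage_compl, compl_Iic] at hcompl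
  exact hcompl.symm

lemma tendsto_trueCDF_atTop (hh : AEMeasurable h μ) : Tendsto (trueCDF μ h) atTop (𝓝 1) := by
  have := Measure.isProbabilityMeasure_map hh
  refine (tendsto_cdf_atTop (μ.map h)).congr fun t ↦ ?_
  rw [cdf_eq_real, map_measureReal_apply_of_aemeasurable hh measurableSet_Iic]
  rfl

lemma not_integrable_trueCDF (hh : AEMeasurable h μ) : ¬ Integrable (trueCDF μ h) := fun hint ↦
  one_ne_zero <| (hint.integrableAtFilter atTop).eq_zero_of_tendsto
    (fun s hs ↦ by
      obtain ⟨a, ha⟩ := mem_atTop_sets.1 hs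
      exact measure_mono_top (s₁ := Ici a) ha Real.volume_Ici)
    (tendsto_trueCDF_atTop hh)

lemma trueCDF_eq_one_of_ae_le (hle : ∀ᵐ ω ∂μ, h ω ≤ t) : trueCDF μ h t = 1 := by
  have hfull : μ {ω | h ω ≤ t} = 1 :=
    (measure_congr (eventuallyEq_univ.2 hle)).trans measure_univ
  simp [trueCDF, hfull]

lemma cdfStdDev_le_one : cdfStdDev μ h t ≤ 1 :=
  Real.sqrt_le_one.2 <| mul_le_one₀ trueCDF_le_one (sub_nonneg.2 trueCDF_le_one)
    (sub_le_self 1 trueCDF_nonneg)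

lemma cdfStdDev_eq_zero_of_notMem_Icc {b : ℝ} (hb : ∀ᵐ ω ∂μ, |h ω| ≤ b) (ht : t ∉ Icc (-b) b) :
    cdfStdDev μ h t = 0 := by
  rw [mem_Icc, ← abs_le, not_le, lt_abs] at ht
  obtain ht | ht := ht
  · have hle : ∀ᵐ ω ∂μ, h ω ≤ t := hb.mono fun ω hω ↦ (le_abs_self _).trans (hω.trans ht.le)
    simp [cdfStdDev, trueCDF_eq_one_of_ae_le hle]
  · have hlt : ∀ᵐ ω ∂μ, t < h ω := hb.mono fun ω hω ↦ by linarith [neg_le_of_abs_le hω]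
    simp [cdfStdDev, trueCDF_eq_zero_of_ae_lt hlt]

lemma trueCDF_mul_one_sub_le_measureReal (hh : AEMeasurable h μ) :
    trueCDF μ h t * (1 - trueCDF μ h t) ≤ μ.real {ω | |t| ≤ |h ω|} := by
  obtain ht | ht := le_total 0 t
  · calc trueCDF μ h t * (1 - trueCDF μ h t)
        ≤ 1 - trueCDF μ h t :=
          mul_le_of_le_one_left (sub_nonneg.2 trueCDF_le_one) trueCDF_le_one
      _ = μ.real {ω | t < h ω} := one_sub_trueCDF hh
      _ ≤ μ.real {ω | |t| ≤ |h ω|} :=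
          measureReal_mono fun ω hω ↦ abs_le_abs_of_nonneg ht (le_of_lt hω)
  · calc trueCDF μ h t * (1 - trueCDF μ h t)
        ≤ trueCDF μ h t :=
          mul_le_of_le_one_right trueCDF_nonneg (sub_le_self 1 trueCDF_nonneg)
      _ ≤ μ.real {ω | |t| ≤ |h ω|} :=
          measureReal_mono fun ω hω ↦ abs_le_abs_of_nonpos ht hω

lemma abs_mul_cdfStdDev_le_L2norm (hh : MemLp h 2 μ) : |t| * cdfStdDev μ h t ≤ L2norm μ h := by
  have hchebyshev := mul_meas_ge_le_integral_of_nonneg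
    (ae_of_all μ fun ω ↦ sq_nonneg (h ω)) hh.integrable_sq (t ^ 2)
  simp only [sq_le_sq] at hchebyshev
  rw [cdfStdDev, L2norm, ← Real.sqrt_sq_eq_abs, ← Real.sqrt_mul (sq_nonneg t)]
  refine Real.sqrt_le_sqrt (le_trans ?_ hchebyshev)
  gcongr
  exact trueCDF_mul_one_sub_le_measureReal hh.aemeasurable

lemma cdfStdDev_le_div_max {a : ℝ} (ha : 0 < a) (hh : MemLp h 2 μ) (hL2 : L2norm μ h ≤ a) :
    cdfStdDev μ h t ≤ a / max a |t| := by
  rw [le_div_iff₀' (lt_max_of_lt_left ha), max_mul_of_nonneg _ _ cdfStdDev_nonneg]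
  exact max_le (mul_le_of_le_one_right ha.le cdfStdDev_le_one)
    ((abs_mul_cdfStdDev_le_L2norm hh).trans hL2)

end DistributionFunction

section Envelope

variable {a b : ℝ}

lemma continuous_div_max_abs (ha : 0 < a) : Continuous fun t : ℝ ↦ a / max a |t| :=
  continuous_const.div (by fun_prop) fun _ ↦ (lt_max_of_lt_left ha).ne'

lemma intervalIntegral_neg_self_of_even {E : Type*} [NormedAddCommGroup E] [NormedSpace ℝ E]
    {f : ℝ → E} (hf : Function.Even f) (hint : IntervalIntegrable f volume 0 b) :
    ∫ t in -b..b, f t = (2 : ℝ) • ∫ t in 0..b, f t := by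
  have hneg : IntervalIntegrable f volume (-b) 0 := by
    simpa [hf _] using (IntervalIntegrable.iff_comp_neg (by simp)).1 hint.symm
  have hreflect : ∫ t in -b..0, f t = ∫ t in 0..b, f t := by
    simpa [hf _] using (intervalIntegral.integral_comp_neg (a := 0) (b := b) f).symm
  rw [← intervalIntegral.integral_add_adjacent_intervals hneg hint, hreflect, two_smul]

lemma integral_div_max_abs (ha : 0 < a) (hab : a ≤ b) :
    ∫ t in -b..b, a / max a |t| = 2 * a * (1 + Real.log (b / a)) := by
  have hint (c d : ℝ) : IntervalIntegrable (fun t ↦ a / max a |t|) volume c d :=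
    (continuous_div_max_abs ha).intervalIntegrable c d
  have hflat : ∫ t in 0..a, a / max a |t| = a := by
    have hone : EqOn (fun t ↦ a / max a |t|) 1 (uIcc 0 a) := fun t ht ↦ by
      rw [uIcc_of_le ha.le] at ht
      simp [abs_of_nonneg ht.1, max_eq_left ht.2, ha.ne']
    simp [intervalIntegral.integral_congr hone]
  have htail : ∫ t in a..b, a / max a |t| = a * Real.log (b / a) := by
    have hinv : EqOn (fun t ↦ a / max a |t|) (fun t ↦ a * t⁻¹) (uIcc a b) := fun t ht ↦ by
      rw [uIcc_of_le hab] at ht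
      simp [abs_of_nonneg (ha.le.trans ht.1), max_eq_right ht.1, div_eq_mul_inv]
    rw [intervalIntegral.integral_congr hinv, intervalIntegral.integral_const_mul,
      integral_inv_of_pos ha (ha.trans_le hab)]
  have heven : Function.Even fun t : ℝ ↦ a / max a |t| := fun t ↦ by simp only [abs_neg]
  rw [intervalIntegral_neg_self_of_even heven (hint 0 b),
    ← intervalIntegral.integral_add_adjacent_intervals (hint 0 a) (hint a b), hflat, htail,
    smul_eq_mul]
  ring

variable {Ω : Type*} [MeasurableSpace Ω] {μ : Measure Ω} [IsProbabilityMeasure μ] {h : Ω → ℝ}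

lemma integrable_cdfStdDev (hb : ∀ᵐ ω ∂μ, |h ω| ≤ b) : Integrable (cdfStdDev μ h) := by
  rw [← integrableOn_iff_integrable_of_support_subset (s := Icc (-b) b)
    (support_subset_iff'.2 fun t ↦ cdfStdDev_eq_zero_of_notMem_Icc hb)]
  refine Measure.integrableOn_of_bounded measure_Icc_lt_top.ne
    measurable_cdfStdDev.aestronglyMeasurable (M := 1) (ae_of_all _ fun t ↦ ?_)
  rw [Real.norm_of_nonneg cdfStdDev_nonneg]
  exact cdfStdDev_le_one

lemma integral_cdfStdDev_le (ha : 0 < a) (hab : a ≤ b) (hh : AEMeasurable h μ)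
    (hL2 : L2norm μ h ≤ a) (hb : ∀ᵐ ω ∂μ, |h ω| ≤ b) :
    ∫ t, cdfStdDev μ h t ≤ 2 * a * (1 + Real.log (b / a)) := by
  have hmemLp : MemLp h 2 μ := .of_bound hh.aestronglyMeasurable b hb
  calc ∫ t, cdfStdDev μ h t
      = ∫ t in Icc (-b) b, cdfStdDev μ h t :=
        (setIntegral_eq_integral_of_forall_compl_eq_zero fun _ ↦
          cdfStdDev_eq_zero_of_notMem_Icc hb).symm
    _ ≤ ∫ t in Icc (-b) b, a / max a |t| :=
        integral_mono (integrable_cdfStdDev hb).integrableOn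
          (continuous_div_max_abs ha).integrableOn_Icc fun _ ↦ cdfStdDev_le_div_max ha hmemLp hL2
    _ = ∫ t in -b..b, a / max a |t| := by
        rw [integral_Icc_eq_integral_Ioc, intervalIntegral.integral_of_le (by linarith)]
    _ = 2 * a * (1 + Real.log (b / a)) := integral_div_max_abs ha hab

end Envelope

section EmpiricalDistributionFunction

variable {Ω : Type*} {N : ℕ} {h : Ω → ℝ}

lemma empCDF_eq_sum_indicator (xs : Fin N → Ω) (h : Ω → ℝ) (t : ℝ) :
    empCDF xs h t = (∑ i, {ω | h ω ≤ t}.indicator (1 : Ω → ℝ) (xs i)) / N := by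
  classical
  simp [empCDF, indicator_apply, ncard_eq_toFinset_card']

variable [MeasurableSpace Ω] {μ : Measure Ω} [IsProbabilityMeasure μ]

lemma measurable_empCDF_sub_trueCDF (hh : Measurable h) :
    Measurable fun p : (Fin N → Ω) × ℝ ↦ empCDF p.1 h p.2 - trueCDF μ h p.2 := by
  refine .sub ?_ (monotone_trueCDF.measurable.comp measurable_snd)
  simp only [empCDF_eq_sum_indicator]
  refine (Finset.measurable_sum _ fun i _ ↦ ?_).div_const _
  have hlevel : MeasurableSet {p : (Fin N → Ω) × ℝ | h (p.1 i) ≤ p.2} :=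
    measurableSet_le (by fun_prop) measurable_snd
  exact measurable_one.indicator hlevel

lemma integrable_empCDF_sub_trueCDF (hh : Measurable h) (t : ℝ) :
    Integrable (fun xs : Fin N → Ω ↦ empCDF xs h t - trueCDF μ h t) (Measure.pi fun _ ↦ μ) := by
  have hY : Integrable ({ω | h ω ≤ t}.indicator (1 : Ω → ℝ)) μ :=
    memLp_one_iff_integrable.1 (memLp_indicator_one (hh measurableSet_Iic))
  simp only [empCDF_eq_sum_indicator]
  exact ((integrable_finsetSum _ fun i _ ↦ integrable_comp_eval hY).div_const _).sub
    (integrable_const _)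

lemma integral_abs_empCDF_sub_trueCDF_le [NeZero N] (hh : Measurable h) (t : ℝ) :
    ∫ xs : Fin N → Ω, |empCDF xs h t - trueCDF μ h t| ∂(Measure.pi fun _ ↦ μ) ≤
      cdfStdDev μ h t / √N := by
  have hA : MeasurableSet {ω | h ω ≤ t} := hh measurableSet_Iic
  have hmean := integral_abs_sampleMean_sub_le (ι := Fin N) (memLp_indicator_one (μ := μ) hA)
  simp only [empCDF_eq_sum_indicator]
  rw [integral_indicator_one hA, variance_indicator_one hA, Fintype.card_fin] at hmean
  exact hmean

lemma integral_W1_empCDF_le [NeZero N] (hh : Measurable h) (hint : Integrable (cdfStdDev μ h)) :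
    ∫ xs : Fin N → Ω, W1 (empCDF xs h) (trueCDF μ h) ∂(Measure.pi fun _ ↦ μ) ≤
      (∫ t, cdfStdDev μ h t) / √N := by
  have hmeas := (measurable_empCDF_sub_trueCDF (N := N) (μ := μ) hh).abs.aestronglyMeasurable
    (μ := (Measure.pi fun _ ↦ μ).prod volume)
  have hprod : Integrable (uncurry fun (xs : Fin N → Ω) t ↦ |empCDF xs h t - trueCDF μ h t|)
      ((Measure.pi fun _ ↦ μ).prod volume) := by
    refine (integrable_prod_iff' hmeas).2
      ⟨ae_of_all _ fun t ↦ (integrable_empCDF_sub_trueCDF hh t).abs, ?_⟩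
    refine (hint.div_const √N).mono' hmeas.norm.prod_swap.integral_prod_right'
      (ae_of_all _ fun t ↦ ?_)
    rw [Real.norm_of_nonneg (integral_nonneg fun _ ↦ norm_nonneg _)]
    simpa using integral_abs_empCDF_sub_trueCDF_le hh t
  calc ∫ xs : Fin N → Ω, (∫ t, |empCDF xs h t - trueCDF μ h t|) ∂(Measure.pi fun _ ↦ μ)
      = ∫ t, (∫ xs : Fin N → Ω, |empCDF xs h t - trueCDF μ h t| ∂(Measure.pi fun _ ↦ μ)) :=
        integral_integral_swap hprod
    _ ≤ ∫ t, cdfStdDev μ h t / √N :=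
        integral_mono hprod.integral_prod_right (hint.div_const _) fun t ↦
          integral_abs_empCDF_sub_trueCDF_le hh t
    _ = (∫ t, cdfStdDev μ h t) / √N := integral_div _ _

-- A junk value: `0 / 0 = 0` makes the empirical distribution function of the empty sample vanish,
-- so that `W1` is the integral of the non-integrable `trueCDF μ h`.
lemma W1_empCDF_fin_zero (hh : AEMeasurable h μ) (xs : Fin 0 → Ω) :
    W1 (empCDF xs h) (trueCDF μ h) = 0 := by
  refine integral_undef fun hint ↦ not_integrable_trueCDF hh ?_
  simpa [empCDF, abs_of_nonneg trueCDF_nonneg] using hint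

end EmpiricalDistributionFunction

theorem stmt11 {Ω : Type*} [MeasurableSpace Ω] (μ : Measure Ω) [IsProbabilityMeasure μ]
    (N : ℕ) (m M : ℝ) (hm : 0 < m) (hM : 1 ≤ M) (h : Ω → ℝ) (hmeas : Measurable h)
    (hL2 : L2norm μ h ≤ m) (hLinf : ∀ᵐ ω ∂μ, |h ω| ≤ m * M) :
    (∫ xs, W1 (empCDF xs h) (trueCDF μ h) ∂(Measure.pi fun _ : Fin N => μ)) ≤
      2 * m * Real.log (Real.exp 1 * M) / Real.sqrt N := by
  obtain rfl | hN := eq_or_ne N 0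
  · simp [W1_empCDF_fin_zero hmeas.aemeasurable]
  have : NeZero N := ⟨hN⟩
  have hlog : Real.log (Real.exp 1 * M) = 1 + Real.log (m * M / m) := by
    rw [Real.log_mul (Real.exp_ne_zero 1) (by positivity), Real.log_exp,
      mul_div_cancel_left₀ M hm.ne']
  calc ∫ xs, W1 (empCDF xs h) (trueCDF μ h) ∂(Measure.pi fun _ : Fin N => μ)
      ≤ (∫ t, cdfStdDev μ h t) / √N := integral_W1_empCDF_le hmeas (integrable_cdfStdDev hLinf)
    _ ≤ 2 * m * (1 + Real.log (m * M / m)) / √N := by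
        gcongr
        exact integral_cdfStdDev_le hm (le_mul_of_one_le_right hm.le hM) hmeas.aemeasurable
          hL2 hLinf
    _ = 2 * m * Real.log (Real.exp 1 * M) / √N := by rw [hlog]
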